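/- arXiv:2101.02950 — 3 statements merged into one kernel-verified Lean document; each statement's English description precedes it below -/
import Mathlib

section
/- Let M be an even lattice and let L = U ⊕ ⟨−4⟩ ⊕ ⟨−4⟩ ⊕ M, i.e. L = ℤe ⊕ ℤf ⊕ ℤv₁ ⊕ ℤv₂ ⊕ M with (e,e) = (f,f) = 0, (e,f) = 1, (v₁,v₁) = (v₂,v₂) = −4, (v₁,v₂) = 0, and e, f, v₁, v₂ all orthogonal to M. Let Γ = {γ ∈ O(L) : γ(v₁/4) − v₁/4 ∈ L and γ(v₂/4) − v₂/4 ∈ L, and either γu − u ∈ L for all u ∈ M^∨ or γu + u ∈ L for all u ∈ M^∨}. Set l = 2e + 2f + v₁ + v₂ and m = e + v₁/2. Then l is a primitive isotropic vector of L with (m,l) = 0, the isometry −E_{m,l} belongs to Γ, and −id ∉ Γ. Hence ℤl is an irregular 0-dimensional cusp for Γ. -/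
/-!
The Eichler transvections attached to an isotropic `l` and `m ⊥ l` are isometries, and
`E_{m,l}` and `E_{-m,l}` are mutually inverse, so `-E_{m,l}` is an isometry with inverse
`-E_{-m,l}`. For the given `l` and `m` one has `(m,m) = -1`, and the transvection is explicit:

* `E e = e + 2m + l`, `E f = f + 2m`, `E v₁ = -4e - v₁`, `E v₂ = -8e - 4f - 4v₁ - v₂`,
* `E u = u` for `u` orthogonal to `e, f, v₁, v₂`.

As `2m ∈ L`, the lattice is preserved; the images of `v₁` and `v₂` show that `-E` fixes
`v₁/4` and `v₂/4` modulo `L`, and `-E` is `-1` on `M^∨`. Everything else follows from the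
divisibility `(v₁, L) ⊆ 4ℤ`: since `(v₁, l) = -4`, it gives primitivity of `l`, and since
`(v₁, v₁/2) = -2`, it gives `v₁/2 ∉ L`, which excludes `-id` from `Γ`.
-/

noncomputable section

open LinearMap (BilinForm)

variable {V : Type*} [AddCommGroup V] [Module ℚ V]

/-- The Eichler transvection `E_{m,l}` as a linear endomorphism of `V`:
`E_{m,l}(v) = v - (m,v)•l + (l,v)•m - (1/2)(m,m)(l,v)•l`. -/
def eichler (B : BilinForm ℚ V) (m l : V) : V →ₗ[ℚ] V where
  toFun u := u - B m u • l + B l u • m - ((1 / 2 : ℚ) * B m m * B l u) • l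
  map_add' x y := by
    simp only [map_add, LinearMap.add_apply]
    module
  map_smul' a x := by
    simp only [map_smul, LinearMap.smul_apply, smul_eq_mul, RingHom.id_apply]
    module

/-- `l` is a primitive vector of the lattice `L`. -/
def IsPrimitiveIn (L : Submodule ℤ V) (l : V) : Prop :=
  l ∈ L ∧ ∀ (k : ℤ) (u : V), u ∈ L → l = k • u → k = 1 ∨ k = -1

/-- `I = ℤl` is an irregular 0-dimensional cusp for the group of isometries `S`:
`-id ∉ S` and `-E_{m,l} ∈ S` for some `m ⊥ l`. -/
def IsIrregular (B : BilinForm ℚ V) (S : Set (V ≃ₗ[ℚ] V)) (l : V) : Prop :=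
  LinearEquiv.neg ℚ ∉ S ∧
    ∃ m : V, B m l = 0 ∧ ∃ γ ∈ S, (γ : V →ₗ[ℚ] V) = -(eichler B m l)

lemma eichler_apply (B : BilinForm ℚ V) (m l u : V) :
    eichler B m l u = u - B m u • l + B l u • m - ((1 / 2 : ℚ) * B m m * B l u) • l := rfl

lemma eichler_isometry (B : BilinForm ℚ V) (hsymm : ∀ x y : V, B x y = B y x) {m l : V}
    (hll : B l l = 0) (hml : B m l = 0) (x y : V) :
    B (eichler B m l x) (eichler B m l y) = B x y := by
  have hlm : B l m = 0 := by rw [hsymm, hml]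
  simp only [eichler_apply, map_add, map_sub, map_smul, LinearMap.add_apply,
    LinearMap.sub_apply, LinearMap.smul_apply, smul_eq_mul, hll, hml, hlm,
    hsymm x l, hsymm x m]
  ring

lemma eichler_eichler_neg (B : BilinForm ℚ V) (hsymm : ∀ x y : V, B x y = B y x) {m l : V}
    (hll : B l l = 0) (hml : B m l = 0) (x : V) :
    eichler B m l (eichler B (-m) l x) = x := by
  have hlm : B l m = 0 := by rw [hsymm, hml]
  simp only [eichler_apply, map_add, map_sub, map_smul, map_neg, LinearMap.neg_apply,
    hll, hml, hlm]
  module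

/-- The linear automorphism `-E_{m,l}`, with inverse `-E_{-m,l}`. -/
def negEichler (B : BilinForm ℚ V) (hsymm : ∀ x y : V, B x y = B y x) {m l : V}
    (hll : B l l = 0) (hml : B m l = 0) : V ≃ₗ[ℚ] V :=
  LinearEquiv.ofLinearMap (-(eichler B m l)) (-(eichler B (-m) l))
    (by
      ext x
      simp [eichler_eichler_neg B hsymm hll hml])
    (by
      ext x
      have h := eichler_eichler_neg B hsymm (m := -m) hll (by simp [hml]) x
      rw [neg_neg] at h
      simp [h])

/-- A linear map preserves `ℤe + ℤf + ℤv₁ + ℤv₂ + M` once it maps the generators into it. -/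
lemma map_mem_of_generators (T : V →ₗ[ℚ] V) {M L : Submodule ℤ V} {e f v₁ v₂ : V}
    (hL : L = Submodule.span ℤ ({e, f, v₁, v₂} : Set V) ⊔ M)
    (he : T e ∈ L) (hf : T f ∈ L) (h₁ : T v₁ ∈ L) (h₂ : T v₂ ∈ L) (hM : ∀ y ∈ M, T y ∈ L) :
    ∀ x ∈ L, T x ∈ L := by
  have key : L ≤ L.comap T.toAddMonoidHom.toIntLinearMap := by
    conv_lhs => rw [hL]
    refine sup_le (Submodule.span_le.2 ?_) hM
    rintro x (rfl | rfl | rfl | rfl) <;> assumption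
  exact key

/-- A vector `w` with the pairings of `v₁` against the generators of
`ℤe + ℤf + ℤv₁ + ℤv₂ + M` pairs with the whole lattice in `4ℤ`. -/
lemma pairing_dvd_four (B : BilinForm ℚ V) {M L : Submodule ℤ V} {e f v₁ v₂ w : V}
    (hL : L = Submodule.span ℤ ({e, f, v₁, v₂} : Set V) ⊔ M)
    (he : B w e = 0) (hf : B w f = 0) (h₁ : B w v₁ = -4) (h₂ : B w v₂ = 0)
    (hM : ∀ y ∈ M, B w y = 0) : ∀ x ∈ L, ∃ n : ℤ, B w x = 4 * (n : ℚ) := by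
  intro x hx
  rw [hL, Submodule.mem_sup] at hx
  obtain ⟨y, hy, z, hz, rfl⟩ := hx
  rw [map_add, hM z hz, add_zero]
  induction hy using Submodule.span_induction with
  | mem y hy =>
    rcases hy with rfl | rfl | rfl | rfl
    exacts [⟨0, by simp [he]⟩, ⟨0, by simp [hf]⟩, ⟨-1, by simp [h₁]⟩, ⟨0, by simp [h₂]⟩]
  | zero => exact ⟨0, by simp⟩
  | add a b _ _ ha hb =>
    obtain ⟨p, hp⟩ := ha
    obtain ⟨q, hq⟩ := hb
    exact ⟨p + q, by rw [map_add, hp, hq]; push_cast; ring⟩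
  | smul k a _ ha =>
    obtain ⟨p, hp⟩ := ha
    exact ⟨k * p, by rw [map_zsmul, hp, zsmul_eq_mul]; push_cast; ring⟩

/-- for `L = U ⊕ ⟨-4⟩ ⊕ ⟨-4⟩ ⊕ M` and the group `Γ` acting by `±id` on
`A_M` and trivially on `A_{⟨-4⟩⊕⟨-4⟩}`, the vectors `l = 2e + 2f + v₁ + v₂` and
`m = e + v₁/2` give an irregular 0-dimensional cusp `ℤl` for `Γ`. -/
theorem statement15 (B : BilinForm ℚ V) [FiniteDimensional ℚ V]
    (hsymm : ∀ x y : V, B x y = B y x)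
    (hnd : LinearMap.BilinForm.Nondegenerate B)
    (M : Submodule ℤ V)
    (hintM : ∀ x ∈ M, ∀ y ∈ M, ∃ n : ℤ, B x y = (n : ℚ))
    (hevenM : ∀ x ∈ M, ∃ n : ℤ, B x x = 2 * (n : ℚ))
    (hMfg : M.FG)
    (e f v₁ v₂ : V)
    (hee : B e e = 0) (hff : B f f = 0) (hef : B e f = 1)
    (hv₁ : B v₁ v₁ = -4) (hv₂ : B v₂ v₂ = -4) (hv₁₂ : B v₁ v₂ = 0)
    (hev₁ : B e v₁ = 0) (hev₂ : B e v₂ = 0) (hfv₁ : B f v₁ = 0) (hfv₂ : B f v₂ = 0)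
    (horth : ∀ x ∈ M, B e x = 0 ∧ B f x = 0 ∧ B v₁ x = 0 ∧ B v₂ x = 0)
    (L : Submodule ℤ V)
    (hL : L = Submodule.span ℤ ({e, f, v₁, v₂} : Set V) ⊔ M)
    (hspan : Submodule.span ℚ (L : Set V) = ⊤)
    (Γ : Set (V ≃ₗ[ℚ] V))
    (hΓ : Γ = {γ : V ≃ₗ[ℚ] V |
      (∀ x y : V, B (γ x) (γ y) = B x y) ∧ (∀ x ∈ L, γ x ∈ L) ∧ (∀ x ∈ L, γ⁻¹ x ∈ L) ∧
      γ ((4 : ℚ)⁻¹ • v₁) - (4 : ℚ)⁻¹ • v₁ ∈ L ∧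
      γ ((4 : ℚ)⁻¹ • v₂) - (4 : ℚ)⁻¹ • v₂ ∈ L ∧
      ((∀ u : V, u ∈ Submodule.span ℚ (M : Set V) →
          (∀ x ∈ M, ∃ n : ℤ, B u x = (n : ℚ)) → γ u - u ∈ L) ∨
        (∀ u : V, u ∈ Submodule.span ℚ (M : Set V) →
          (∀ x ∈ M, ∃ n : ℤ, B u x = (n : ℚ)) → γ u + u ∈ L))}) :
    IsPrimitiveIn L ((2 : ℚ) • e + (2 : ℚ) • f + v₁ + v₂) ∧
    B ((2 : ℚ) • e + (2 : ℚ) • f + v₁ + v₂) ((2 : ℚ) • e + (2 : ℚ) • f + v₁ + v₂) = 0 ∧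
    B (e + (2 : ℚ)⁻¹ • v₁) ((2 : ℚ) • e + (2 : ℚ) • f + v₁ + v₂) = 0 ∧
    (∃ γ ∈ Γ, (γ : V →ₗ[ℚ] V) =
      -(eichler B (e + (2 : ℚ)⁻¹ • v₁) ((2 : ℚ) • e + (2 : ℚ) • f + v₁ + v₂))) ∧
    LinearEquiv.neg ℚ ∉ Γ ∧
    IsIrregular B Γ ((2 : ℚ) • e + (2 : ℚ) • f + v₁ + v₂) := by
  set l : V := (2 : ℚ) • e + (2 : ℚ) • f + v₁ + v₂ with hl
  set m : V := e + (2 : ℚ)⁻¹ • v₁ with hm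
  have hfe : B f e = 1 := by rw [hsymm, hef]
  have hv₁e : B v₁ e = 0 := by rw [hsymm, hev₁]
  have hv₂e : B v₂ e = 0 := by rw [hsymm, hev₂]
  have hv₁f : B v₁ f = 0 := by rw [hsymm, hfv₁]
  have hv₂f : B v₂ f = 0 := by rw [hsymm, hfv₂]
  have hv₂₁ : B v₂ v₁ = 0 := by rw [hsymm, hv₁₂]
  have hlu (u : V) : B l u = 2 * B e u + 2 * B f u + B v₁ u + B v₂ u := by simp [hl]
  have hmu (u : V) : B m u = B e u + 2⁻¹ * B v₁ u := by simp [hm]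
  have hle : B l e = 2 := by rw [hlu, hee, hfe, hv₁e, hv₂e]; norm_num
  have hlf : B l f = 2 := by rw [hlu, hef, hff, hv₁f, hv₂f]; norm_num
  have hlv₁ : B l v₁ = -4 := by rw [hlu, hev₁, hfv₁, hv₁, hv₂₁]; norm_num
  have hlv₂ : B l v₂ = -4 := by rw [hlu, hev₂, hfv₂, hv₁₂, hv₂]; norm_num
  have hme : B m e = 0 := by rw [hmu, hee, hv₁e]; norm_num
  have hmf : B m f = 1 := by rw [hmu, hef, hv₁f]; norm_num
  have hmv₁ : B m v₁ = -2 := by rw [hmu, hev₁, hv₁]; norm_num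
  have hmv₂ : B m v₂ = 0 := by rw [hmu, hev₂, hv₁₂]; norm_num
  have hll : B l l = 0 := by
    conv_lhs => arg 2; rw [hl]
    simp only [map_add, map_smul, smul_eq_mul, hle, hlf, hlv₁, hlv₂]
    norm_num
  have hml : B m l = 0 := by
    conv_lhs => arg 2; rw [hl]
    simp only [map_add, map_smul, smul_eq_mul, hme, hmf, hmv₁, hmv₂]
    norm_num
  have hmm : B m m = -1 := by
    conv_lhs => arg 2; rw [hm]
    simp only [map_add, map_smul, smul_eq_mul, hme, hmv₁]
    norm_num
  have heL : e ∈ L := hL ▸ Submodule.mem_sup_left (Submodule.subset_span (by simp))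
  have hfL : f ∈ L := hL ▸ Submodule.mem_sup_left (Submodule.subset_span (by simp))
  have hv₁L : v₁ ∈ L := hL ▸ Submodule.mem_sup_left (Submodule.subset_span (by simp))
  have hv₂L : v₂ ∈ L := hL ▸ Submodule.mem_sup_left (Submodule.subset_span (by simp))
  have hML : M ≤ L := hL ▸ le_sup_right
  -- Integral combinations of the four generators, written with rational coefficients.
  have hcomb (a b c d : ℤ) :
      (a : ℚ) • e + (b : ℚ) • f + (c : ℚ) • v₁ + (d : ℚ) • v₂ ∈ L := by
    simp only [Int.cast_smul_eq_zsmul]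
    exact L.add_mem (L.add_mem (L.add_mem (L.smul_mem a heL) (L.smul_mem b hfL))
      (L.smul_mem c hv₁L)) (L.smul_mem d hv₂L)
  have hlL : l ∈ L := by
    convert hcomb 2 2 1 1 using 1
    rw [hl]
    push_cast
    module
  have hE (x : V) : eichler B m l x = x - B m x • l + B l x • m + ((1 / 2 : ℚ) * B l x) • l := by
    rw [eichler_apply, hmm]
    module
  have hE' (x : V) :
      eichler B (-m) l x = x + B m x • l - B l x • m + ((1 / 2 : ℚ) * B l x) • l := by
    simp only [eichler_apply, map_neg, LinearMap.neg_apply, neg_neg, hmm]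
    module
  have hMorth : ∀ u ∈ Submodule.span ℚ (M : Set V), B l u = 0 ∧ B m u = 0 := by
    intro u hu
    induction hu using Submodule.span_induction with
    | mem x hx =>
      obtain ⟨h1, h2, h3, h4⟩ := horth x hx
      rw [hlu, hmu, h1, h2, h3, h4]
      norm_num
    | zero => simp
    | add x y _ _ hx hy => simp [hx.1, hx.2, hy.1, hy.2]
    | smul a x _ hx => simp [hx.1, hx.2]
  have hEM : ∀ u ∈ Submodule.span ℚ (M : Set V), eichler B m l u = u := by
    intro u hu
    simp [hE, hMorth u hu]
  have hE'M : ∀ u ∈ Submodule.span ℚ (M : Set V), eichler B (-m) l u = u := by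
    intro u hu
    simp [hE', hMorth u hu]
  have hEv₁ : eichler B m l v₁ = (-4 : ℚ) • e - v₁ := by
    rw [hE, hmv₁, hlv₁, hm]
    module
  have hEv₂ : eichler B m l v₂ = (-8 : ℚ) • e + (-4 : ℚ) • f + (-4 : ℚ) • v₁ - v₂ := by
    rw [hE, hmv₂, hlv₂, hm, hl]
    module
  have hEL : ∀ x ∈ L, eichler B m l x ∈ L := by
    refine map_mem_of_generators _ hL ?_ ?_ ?_ ?_ fun y hy => ?_
    · convert hcomb 5 2 2 1 using 1
      rw [hE, hme, hle, hm, hl]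
      push_cast
      module
    · convert hcomb 2 1 1 0 using 1
      rw [hE, hmf, hlf, hm]
      push_cast
      module
    · convert hcomb (-4) 0 (-1) 0 using 1
      rw [hEv₁]
      push_cast
      module
    · convert hcomb (-8) (-4) (-4) (-1) using 1
      rw [hEv₂]
      push_cast
      module
    · rw [hEM y (Submodule.subset_span hy)]
      exact hML hy
  have hE'L : ∀ x ∈ L, eichler B (-m) l x ∈ L := by
    refine map_mem_of_generators _ hL ?_ ?_ ?_ ?_ fun y hy => ?_
    · convert hcomb 1 2 0 1 using 1
      rw [hE', hme, hle, hm, hl]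
      push_cast
      module
    · convert hcomb 2 5 1 2 using 1
      rw [hE', hmf, hlf, hm, hl]
      push_cast
      module
    · convert hcomb (-4) (-8) (-1) (-4) using 1
      rw [hE', hmv₁, hlv₁, hm, hl]
      push_cast
      module
    · convert hcomb 0 (-4) 0 (-1) using 1
      rw [hE', hmv₂, hlv₂, hm, hl]
      push_cast
      module
    · rw [hE'M y (Submodule.subset_span hy)]
      exact hML hy
  have hdvd : ∀ x ∈ L, ∃ n : ℤ, B v₁ x = 4 * (n : ℚ) :=
    pairing_dvd_four B hL hv₁e hv₁f hv₁ hv₁₂ fun y hy => (horth y hy).2.2.1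
  have hprim : IsPrimitiveIn L l := by
    refine ⟨hlL, fun k u hu hku => ?_⟩
    obtain ⟨n, hn⟩ := hdvd u hu
    have h : B v₁ l = -4 := by rw [hsymm, hlv₁]
    rw [hku, map_zsmul, hn, zsmul_eq_mul] at h
    have hkn : k * -n = 1 := by
      have : (k : ℚ) * -n = 1 := by linarith
      exact_mod_cast this
    exact Int.isUnit_iff.1 (IsUnit.of_mul_eq_one _ hkn)
  have hmem : ∃ γ ∈ Γ, (γ : V →ₗ[ℚ] V) = -(eichler B m l) := by
    have happ (x : V) : negEichler B hsymm hll hml x = -(eichler B m l x) := rfl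
    refine ⟨negEichler B hsymm hll hml, ?_, rfl⟩
    rw [hΓ]
    refine ⟨fun x y => ?_, fun x hx => L.neg_mem (hEL x hx), fun x hx => L.neg_mem (hE'L x hx),
      ?_, ?_, Or.inr fun u hu _ => ?_⟩
    · simp only [happ, map_neg, LinearMap.neg_apply, neg_neg]
      exact eichler_isometry B hsymm hll hml x y
    · convert heL using 1
      rw [happ, map_smul, hEv₁]
      module
    · convert hcomb 2 1 1 0 using 1
      rw [happ, map_smul, hEv₂]
      push_cast
      module
    · rw [happ, hEM u hu, neg_add_cancel]
      exact L.zero_mem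
  have hneg : LinearEquiv.neg ℚ ∉ Γ := by
    rw [hΓ]
    rintro ⟨-, -, -, h, -⟩
    -- This element is `-v₁/2`, whose pairing with `v₁` is `2`.
    obtain ⟨n, hn⟩ := hdvd _ h
    simp only [LinearEquiv.neg_apply, map_sub, map_neg, map_smul, hv₁, smul_eq_mul] at hn
    have : (1 : ℚ) = 2 * n := by linarith
    have : (1 : ℤ) = 2 * n := by exact_mod_cast this
    omega
  exact ⟨hprim, hll, hml, hmem, hneg, hneg, m, hml, hmem⟩
end
end

section
/- Let L be a lattice and J ⊆ L a rank-2 primitive totally isotropic sublattice, and let l₁, l₂ be a ℚ-basis of J_ℚ. Then: (i) for every c ∈ ℚ, the Eichler transvection E_{c·l₂, l₁} fixes J_ℚ^⊥ pointwise; (ii) conversely, every isometry γ ∈ O(L_ℚ) that fixes J_ℚ^⊥ pointwise equals E_{c·l₂, l₁} for a unique c ∈ ℚ; (iii) the map c ↦ E_{c·l₂, l₁} is an injective group homomorphism from (ℚ, +) to O(L_ℚ). (This realizes the canonical isomorphism ∧²J_ℚ ≅ U(J)_ℚ of the paper's Heisenberg-group lemma, where U(J)_ℚ is the center of the unipotent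 part of the stabilizer of J_ℚ.) -/
/-!
For isotropic, mutually orthogonal `l₁, l₂` the transvection is
`E_{c·l₂, l₁}(v) = v - c (l₂,v) l₁ + c (l₁,v) l₂` (`eichler_smul_apply`), from which it is clear that
it fixes `J_ℚ^⊥`, is additive in `c` and is an isometry. For the converse choose, by nondegeneracy,
vectors `u₁, u₂` with `(lᵢ, uⱼ) = δᵢⱼ` (`exists_dual_pair`), so that `V = J_ℚ^⊥ ⊕ ℚu₁ ⊕ ℚu₂`. An
isometry `γ` fixing `J_ℚ^⊥` moves each `uᵢ` by a vector orthogonal to `J_ℚ^⊥`, that is by an element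
of `J_ℚ` (`eq_of_perp_perp`), and preservation of the products `(uᵢ, uⱼ)` forces the `2 × 2` matrix of
these displacements to be skew-symmetric. Its one free entry is the parameter `c`
(`exists_eq_eichler`), which is recovered as `(E_{c·l₂, l₁}(u₁) - u₁, u₂)`.
-/

noncomputable section

open LinearMap (BilinForm)

variable {V : Type*} [AddCommGroup V] [Module ℚ V]

/-- For isotropic `l₂` the quadratic term of `E_{c·l₂, l₁}` vanishes. -/
theorem eichler_smul_apply (B : BilinForm ℚ V) {l₁ l₂ : V} (h22 : B l₂ l₂ = 0) (c : ℚ) (v : V) :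
    eichler B (c • l₂) l₁ v = v - (c * B l₂ v) • l₁ + (c * B l₁ v) • l₂ := by
  simp [eichler, h22, smul_smul, mul_comm]

theorem apply_eq_zero_of_mem_span (B : BilinForm ℚ V) {s : Set V} {v : V}
    (hv : ∀ y ∈ s, B v y = 0) {x : V} (hx : x ∈ Submodule.span ℚ s) : B v x = 0 :=
  (Submodule.span_le (p := LinearMap.ker (B v))).2 hv hx

/-- Linearly independent vectors `l₁, l₂` admit a dual pair `u₁, u₂`: by nondegeneracy every linear
functional on `V` is of the form `v ↦ B v u`. -/
theorem exists_dual_pair (B : BilinForm ℚ V) [FiniteDimensional ℚ V]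
    (hnd : LinearMap.BilinForm.Nondegenerate B) {l₁ l₂ : V}
    (hbasis : LinearIndependent ℚ ![l₁, l₂]) :
    ∃ u₁ u₂ : V, B l₁ u₁ = 1 ∧ B l₂ u₁ = 0 ∧ B l₁ u₂ = 0 ∧ B l₂ u₂ = 1 := by
  have key : ∀ a b : ℚ, ∃ u : V, B l₁ u = a ∧ B l₂ u = b := by
    intro a b
    obtain ⟨f, hf⟩ := LinearMap.exists_extend
      ((Module.Basis.span hbasis).constr ℚ (![a, b] : Fin 2 → ℚ))
    have hval : ∀ i, f (![l₁, l₂] i) = (![a, b] : Fin 2 → ℚ) i := by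
      intro i
      rw [← Module.Basis.constr_basis (Module.Basis.span hbasis) ℚ (![a, b] : Fin 2 → ℚ) i, ← hf]
      simp [Module.Basis.span_apply]
    have hnd' : LinearMap.BilinForm.Nondegenerate (LinearMap.BilinForm.flip B) :=
      LinearMap.BilinForm.nondegenerate_flip_iff.2 hnd
    refine ⟨(LinearMap.BilinForm.toDual _ hnd').symm f, ?_, ?_⟩
    · have := LinearMap.BilinForm.apply_toDual_symm_apply (hB := hnd') f l₁
      rw [LinearMap.BilinForm.flip_apply] at this
      exact this.trans (hval 0)
    · have := LinearMap.BilinForm.apply_toDual_symm_apply (hB := hnd') f l₂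
      rw [LinearMap.BilinForm.flip_apply] at this
      exact this.trans (hval 1)
  obtain ⟨u₁, h1, h2⟩ := key 1 0
  obtain ⟨u₂, h3, h4⟩ := key 0 1
  exact ⟨u₁, u₂, h1, h2, h3, h4⟩

/-- The double orthogonal complement of the span of `l₁, l₂` is that span again, with the
coefficients of a vector read off from the dual pair `u₁, u₂`. -/
theorem eq_of_perp_perp (B : BilinForm ℚ V) (hnd : LinearMap.BilinForm.Nondegenerate B)
    {l₁ l₂ u₁ u₂ : V} (a11 : B l₁ u₁ = 1) (a21 : B l₂ u₁ = 0) (a12 : B l₁ u₂ = 0)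
    (a22 : B l₂ u₂ = 1) {x : V} (hx : ∀ w : V, B l₁ w = 0 → B l₂ w = 0 → B x w = 0) :
    x = B x u₁ • l₁ + B x u₂ • l₂ := by
  rw [← sub_eq_zero]
  refine hnd.1 _ fun v => ?_
  have := hx (v - B l₁ v • u₁ - B l₂ v • u₂) (by simp [a11, a12]) (by simp [a21, a22])
  simp only [map_sub, map_smul, smul_eq_mul] at this
  simp only [LinearMap.sub_apply, LinearMap.add_apply, LinearMap.smul_apply, map_sub, map_add,
    map_smul, smul_eq_mul]
  linarith

/-- An isometry `γ` fixing the orthogonal complement of the isotropic plane spanned by `l₁, l₂` is a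
transvection. -/
theorem exists_eq_eichler (B : BilinForm ℚ V) (hsymm : ∀ x y : V, B x y = B y x)
    (hnd : LinearMap.BilinForm.Nondegenerate B) {l₁ l₂ u₁ u₂ : V}
    (h11 : B l₁ l₁ = 0) (h12 : B l₁ l₂ = 0) (h22 : B l₂ l₂ = 0)
    (a11 : B l₁ u₁ = 1) (a21 : B l₂ u₁ = 0) (a12 : B l₁ u₂ = 0) (a22 : B l₂ u₂ = 1)
    (γ : V ≃ₗ[ℚ] V) (hγ : ∀ v w : V, B (γ v) (γ w) = B v w)
    (hfix : ∀ w : V, B l₁ w = 0 → B l₂ w = 0 → γ w = w) :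
    ∃ c : ℚ, (γ : V →ₗ[ℚ] V) = eichler B (c • l₂) l₁ := by
  have h21 : B l₂ l₁ = 0 := by rw [hsymm, h12]
  have hdisp : ∀ u : V, ∃ p q : ℚ, γ u = u + p • l₁ + q • l₂ := by
    intro u
    refine ⟨B (γ u - u) u₁, B (γ u - u) u₂, ?_⟩
    have := eq_of_perp_perp B hnd a11 a21 a12 a22 (x := γ u - u) fun w h1 h2 => by
      have h := hγ u w
      rw [hfix w h1 h2] at h
      simp [h]
    rw [add_assoc, ← this, add_sub_cancel]
  obtain ⟨p₁, q₁, hu₁⟩ := hdisp u₁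
  obtain ⟨p₂, q₂, hu₂⟩ := hdisp u₂
  -- Preservation of the Gram matrix of `u₁, u₂` makes the displacement matrix skew-symmetric.
  have e11 := hγ u₁ u₁
  have e12 := hγ u₁ u₂
  have e22 := hγ u₂ u₂
  simp only [hu₁, hu₂, map_add, map_smul, LinearMap.add_apply, LinearMap.smul_apply, smul_eq_mul,
    h11, h12, h21, h22, a11, a12, a21, a22, hsymm u₁ l₁, hsymm u₁ l₂, hsymm u₂ l₁,
    hsymm u₂ l₂] at e11 e12 e22
  have hp₁ : p₁ = 0 := by linarith
  have hq₂ : q₂ = 0 := by linarith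
  have hp₂ : p₂ = -q₁ := by linarith
  refine ⟨q₁, LinearMap.ext fun v => ?_⟩
  have hw := hfix (v - B l₁ v • u₁ - B l₂ v • u₂) (by simp [a11, a12]) (by simp [a21, a22])
  simp only [map_sub, map_smul, hu₁, hu₂, hp₁, hq₂, hp₂] at hw
  rw [LinearEquiv.coe_coe, eichler_smul_apply B h22]
  linear_combination (norm := module) hw

/-- for a rank-2 primitive totally isotropic `J ⊆ L` with `ℚ`-basis
`l₁, l₂` of `J_ℚ`: (i) each `E_{c·l₂, l₁}` fixes `J_ℚ^⊥` pointwise; (ii) every isometry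
fixing `J_ℚ^⊥` pointwise equals `E_{c·l₂, l₁}` for a unique `c ∈ ℚ`; (iii) `c ↦ E_{c·l₂,l₁}`
is an injective group homomorphism from `(ℚ, +)` to `O(L_ℚ)`. -/
theorem statement17 (B : BilinForm ℚ V) [FiniteDimensional ℚ V]
    (hsymm : ∀ x y : V, B x y = B y x)
    (hnd : LinearMap.BilinForm.Nondegenerate B)
    (L : Submodule ℤ V) (hfg : L.FG)
    (hspan : Submodule.span ℚ (L : Set V) = ⊤)
    (hint : ∀ x ∈ L, ∀ y ∈ L, ∃ n : ℤ, B x y = (n : ℚ))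
    (j₁ j₂ : V) (J : Submodule ℤ V)
    (hJ : J = Submodule.span ℤ ({j₁, j₂} : Set V))
    (hind : LinearIndependent ℚ ![j₁, j₂])
    (hJL : J ≤ L)
    (hJiso : ∀ x ∈ J, ∀ y ∈ J, B x y = 0)
    (hJprim : ∀ x ∈ L, ∀ n : ℤ, n ≠ 0 → n • x ∈ J → x ∈ J)
    (l₁ l₂ : V)
    (hl₁ : l₁ ∈ Submodule.span ℚ (J : Set V)) (hl₂ : l₂ ∈ Submodule.span ℚ (J : Set V))
    (hbasis : LinearIndependent ℚ ![l₁, l₂])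
    (hspan₂ : Submodule.span ℚ ({l₁, l₂} : Set V) = Submodule.span ℚ (J : Set V)) :
    -- (i)
    (∀ c : ℚ, ∀ v : V, (∀ x ∈ J, B v x = 0) → eichler B (c • l₂) l₁ v = v) ∧
    -- (ii)
    (∀ γ : V ≃ₗ[ℚ] V, (∀ v w : V, B (γ v) (γ w) = B v w) →
      (∀ v : V, (∀ x ∈ J, B v x = 0) → γ v = v) →
      ∃! c : ℚ, (γ : V →ₗ[ℚ] V) = eichler B (c • l₂) l₁) ∧
    -- (iii): a homomorphism from `(ℚ,+)` ...
    (∀ c c' : ℚ, eichler B ((c + c') • l₂) l₁ =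
      eichler B (c • l₂) l₁ ∘ₗ eichler B (c' • l₂) l₁) ∧
    -- ... to `O(L_ℚ)` ...
    (∀ c : ℚ, ∀ v w : V,
      B (eichler B (c • l₂) l₁ v) (eichler B (c • l₂) l₁ w) = B v w) ∧
    -- ... which is injective:
    Function.Injective (fun c : ℚ => eichler B (c • l₂) l₁) := by
  have hJ₁ : ∀ x ∈ Submodule.span ℚ (J : Set V), ∀ v : V, (∀ y ∈ J, B v y = 0) → B v x = 0 :=
    fun x hx v hv => apply_eq_zero_of_mem_span B hv hx
  have hiso : ∀ x ∈ Submodule.span ℚ (J : Set V),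
      ∀ y ∈ Submodule.span ℚ (J : Set V), B x y = 0 := by
    intro x hx y hy
    refine hJ₁ y hy x fun z hz => ?_
    rw [hsymm]
    exact hJ₁ x hx z fun w hw => hJiso z hz w hw
  have h11 := hiso l₁ hl₁ l₁ hl₁
  have h12 := hiso l₁ hl₁ l₂ hl₂
  have h21 := hiso l₂ hl₂ l₁ hl₁
  have h22 := hiso l₂ hl₂ l₂ hl₂
  -- Orthogonality to `J` may be tested on the basis `l₁, l₂` of `J_ℚ`.
  have hperp : ∀ v : V, B l₁ v = 0 → B l₂ v = 0 → ∀ x ∈ J, B v x = 0 := by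
    intro v h1 h2 x hx
    refine apply_eq_zero_of_mem_span B (s := {l₁, l₂}) ?_ (hspan₂ ▸ Submodule.subset_span hx)
    rintro y (rfl | rfl)
    · rw [hsymm, h1]
    · rw [hsymm, h2]
  obtain ⟨u₁, u₂, a11, a21, a12, a22⟩ := exists_dual_pair B hnd hbasis
  have hinj : Function.Injective (fun c : ℚ => eichler B (c • l₂) l₁) := by
    intro c c' h
    have h := congrArg (fun f : V →ₗ[ℚ] V => B (f u₁) u₂) h
    simpa [eichler_smul_apply B h22, a11, a12, a21, a22] using h
  refine ⟨?_, ?_, ?_, ?_, hinj⟩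
  · intro c v hv
    have h1 : B l₁ v = 0 := by rw [hsymm]; exact hJ₁ l₁ hl₁ v hv
    have h2 : B l₂ v = 0 := by rw [hsymm]; exact hJ₁ l₂ hl₂ v hv
    simp [eichler_smul_apply B h22, h1, h2]
  · intro γ hγ hfix
    have hfix' : ∀ w : V, B l₁ w = 0 → B l₂ w = 0 → γ w = w :=
      fun w h1 h2 => hfix w (hperp w h1 h2)
    obtain ⟨c, hc⟩ := exists_eq_eichler B hsymm hnd h11 h12 h22 a11 a21 a12 a22 γ hγ hfix'
    exact ⟨c, hc, fun c' hc' => hinj (hc'.symm.trans hc)⟩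
  · intro c c'
    ext v
    simp only [LinearMap.comp_apply, eichler_smul_apply B h22, map_add, map_sub, map_smul,
      h11, h12, h21, h22, smul_eq_mul]
    module
  · intro c v w
    simp only [eichler_smul_apply B h22, map_add, map_sub, map_smul, LinearMap.add_apply,
      LinearMap.sub_apply, LinearMap.smul_apply, h11, h12, h21, h22, smul_eq_mul,
      hsymm v l₁, hsymm v l₂]
    ring
end
end

section
/- Let L be a lattice and Γ ≤ O(L) a subgroup having no irregular 0-dimensional cusp, i.e. it is not the case that −id ∉ Γ and −E_{m,l} ∈ Γ for some primitive isotropic vector l ∈ L and m ∈ L_ℚ with (m,l) = 0. Then Γ has no irregular 1-dimensional cusp: there is no rank-2 primitive totally isotropic sublattice J ⊆ L such that −id ∉ Γ and −E_{m,l} ∈ Γ for some l, m ∈ J_ℚ with l ≠ 0. -/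
/-!
If `(m,m) = 0` then `E_{m,l}(v) = v - (m,v)l + (l,v)m` is homogeneous: `E_{q⁻¹m, ql} = E_{m,l}` for
every nonzero `q`. Given an irregular 1-dimensional cusp `J` with `-E_{m,l} ∈ Γ`, the line `ℚl` meets
`L` in `ℤ(ql)` for some nonzero `q`, and `ql` is primitive in `L` because `J` is primitive in `L` and
`ql` has coprime coordinates in a basis of `J`. Hence `-E_{q⁻¹m, ql} = -E_{m,l} ∈ Γ` makes `ℤ(ql)` an
irregular 0-dimensional cusp, contrary to assumption.
-/

noncomputable section

open LinearMap (BilinForm)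

variable {V : Type*} [AddCommGroup V] [Module ℚ V]

/-- A nonzero rational pair is proportional to a coprime integral pair. -/
lemma exists_coprime_smul (a b : ℚ) (h : ¬ (a = 0 ∧ b = 0)) :
    ∃ (q : ℚ) (x y : ℤ), q ≠ 0 ∧ Int.gcd x y = 1 ∧ q * a = x ∧ q * b = y := by
  have ha : (a.den : ℚ) ≠ 0 := by exact_mod_cast a.den_ne_zero
  have hb : (b.den : ℚ) ≠ 0 := by exact_mod_cast b.den_ne_zero
  have hg : 0 < Int.gcd (a.num * b.den) (b.num * a.den) := by
    rw [Int.gcd_pos_iff]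
    by_contra! hc
    apply h
    simpa using hc
  obtain ⟨x, y, hxy, hx, hy⟩ := Int.exists_gcd_one hg
  set g := Int.gcd (a.num * b.den) (b.num * a.den) with hgdef
  have hg' : (g : ℚ) ≠ 0 := by exact_mod_cast hg.ne'
  have hx' : (a.num : ℚ) * b.den = x * g := by exact_mod_cast hx
  have hy' : (b.num : ℚ) * a.den = y * g := by exact_mod_cast hy
  refine ⟨a.den * b.den / g, x, y, by positivity, hxy, ?_, ?_⟩
  · rw [div_mul_eq_mul_div, div_eq_iff hg', ← hx', ← Rat.mul_den_eq_num a]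
    ring
  · rw [div_mul_eq_mul_div, div_eq_iff hg', ← hy', ← Rat.mul_den_eq_num b]
    ring

lemma eichler_inv_smul_smul (B : BilinForm ℚ V) (m l : V) (hm : B m m = 0) (q : ℚ) (hq : q ≠ 0) :
    eichler B (q⁻¹ • m) (q • l) = eichler B m l := by
  ext v
  simp only [eichler, LinearMap.coe_mk, AddHom.coe_mk, map_smul, LinearMap.smul_apply,
    smul_eq_mul, hm, smul_smul]
  congr 2
  · congr 3
    field_simp
  · congr 1
    field_simp
  · simp

/-- In a primitive sublattice `J = ℤj₁ + ℤj₂` of `L`, a vector whose coordinates are coprime is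
primitive in `L`. -/
lemma isPrimitiveIn_of_gcd_eq_one (L : Submodule ℤ V) (j₁ j₂ : V)
    (hli : LinearIndependent ℚ ![j₁, j₂])
    (hJL : Submodule.span ℤ ({j₁, j₂} : Set V) ≤ L)
    (hsat : ∀ x ∈ L, ∀ n : ℤ, n ≠ 0 → n • x ∈ Submodule.span ℤ ({j₁, j₂} : Set V) →
      x ∈ Submodule.span ℤ ({j₁, j₂} : Set V))
    (x y : ℤ) (hxy : Int.gcd x y = 1) : IsPrimitiveIn L (x • j₁ + y • j₂) := by
  rw [LinearIndependent.pair_iff] at hli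
  have hmem : x • j₁ + y • j₂ ∈ Submodule.span ℤ ({j₁, j₂} : Set V) :=
    Submodule.mem_span_pair.2 ⟨x, y, rfl⟩
  -- Coordinates are unique; the linear independence is over `ℚ`, the coordinates are integral.
  have key : ∀ k c d : ℤ, x • j₁ + y • j₂ = k • (c • j₁ + d • j₂) → x = k * c ∧ y = k * d := by
    intro k c d h
    have := hli ((x - k * c : ℤ) : ℚ) ((y - k * d : ℤ) : ℚ) (by
      rw [Int.cast_smul_eq_zsmul, Int.cast_smul_eq_zsmul]
      have h' := sub_eq_zero.2 h
      rw [← h']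
      module)
    obtain ⟨h1, h2⟩ := this
    have h1 : x - k * c = 0 := by exact_mod_cast h1
    have h2 : y - k * d = 0 := by exact_mod_cast h2
    exact ⟨by linarith, by linarith⟩
  refine ⟨hJL hmem, fun k u hu h => ?_⟩
  have hk : k ≠ 0 := by
    rintro rfl
    obtain ⟨rfl, rfl⟩ := key 0 0 0 (by rw [h]; simp)
    simp at hxy
  obtain ⟨c, d, rfl⟩ := Submodule.mem_span_pair.1 (hsat u hu k hk (h ▸ hmem))
  obtain ⟨rfl, rfl⟩ := key k c d h
  have hdvd : k ∣ ((Int.gcd (k * c) (k * d) : ℕ) : ℤ) :=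
    Int.dvd_coe_gcd (dvd_mul_right _ _) (dvd_mul_right _ _)
  rw [hxy] at hdvd
  exact Int.isUnit_iff.1 (isUnit_of_dvd_one (by simpa using hdvd))

/-- if `Γ ≤ O(L)` has no irregular 0-dimensional cusp, then it has no
irregular 1-dimensional cusp. -/
theorem statement19 (B : BilinForm ℚ V) [FiniteDimensional ℚ V]
    (hsymm : ∀ x y : V, B x y = B y x)
    (hnd : LinearMap.BilinForm.Nondegenerate B)
    (L : Submodule ℤ V) (hfg : L.FG)
    (hspan : Submodule.span ℚ (L : Set V) = ⊤)
    (hint : ∀ x ∈ L, ∀ y ∈ L, ∃ n : ℤ, B x y = (n : ℚ))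
    (Γ : Subgroup (V ≃ₗ[ℚ] V))
    (hΓO : ∀ γ ∈ Γ, ∀ v w : V, B (γ v) (γ w) = B v w)
    (hΓL : ∀ γ ∈ Γ, ∀ x ∈ L, γ x ∈ L)
    -- `Γ` has no irregular 0-dimensional cusp:
    (hreg : ¬ (LinearEquiv.neg ℚ ∉ Γ ∧
      ∃ l : V, IsPrimitiveIn L l ∧ B l l = 0 ∧
        ∃ m : V, B m l = 0 ∧ ∃ γ ∈ Γ, (γ : V →ₗ[ℚ] V) = -(eichler B m l))) :
    -- then `Γ` has no irregular 1-dimensional cusp: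
    ¬ ∃ (j₁ j₂ : V) (J : Submodule ℤ V),
      J = Submodule.span ℤ ({j₁, j₂} : Set V) ∧
      LinearIndependent ℚ ![j₁, j₂] ∧
      J ≤ L ∧
      (∀ x ∈ J, ∀ y ∈ J, B x y = 0) ∧
      (∀ x ∈ L, ∀ n : ℤ, n ≠ 0 → n • x ∈ J → x ∈ J) ∧
      LinearEquiv.neg ℚ ∉ Γ ∧
      ∃ l ∈ Submodule.span ℚ (J : Set V), ∃ m ∈ Submodule.span ℚ (J : Set V),
        l ≠ 0 ∧ ∃ γ ∈ Γ, (γ : V →ₗ[ℚ] V) = -(eichler B m l) := by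
  rintro ⟨j₁, j₂, J, rfl, hli, hJL, hiso, hsat, hneg, l, hl, m, hm, hl0, γ, hγ, hγE⟩
  apply hreg
  refine ⟨hneg, ?_⟩
  have h₁ : j₁ ∈ Submodule.span ℤ ({j₁, j₂} : Set V) := Submodule.subset_span (by simp)
  have h₂ : j₂ ∈ Submodule.span ℤ ({j₁, j₂} : Set V) := Submodule.subset_span (by simp)
  rw [Submodule.span_span_of_tower, Submodule.mem_span_pair] at hl hm
  obtain ⟨a, b, rfl⟩ := hl
  obtain ⟨c, d, rfl⟩ := hm
  have hB : ∀ a b c d : ℚ, B (a • j₁ + b • j₂) (c • j₁ + d • j₂) = 0 := by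
    intro a b c d
    simp [hiso _ h₁ _ h₁, hiso _ h₁ _ h₂, hiso _ h₂ _ h₁, hiso _ h₂ _ h₂]
  obtain ⟨q, x, y, hq, hxy, hx, hy⟩ := exists_coprime_smul a b (by
    rintro ⟨rfl, rfl⟩
    simp at hl0)
  have hql : q • (a • j₁ + b • j₂) = x • j₁ + y • j₂ := by
    rw [smul_add, smul_smul, smul_smul, hx, hy, Int.cast_smul_eq_zsmul, Int.cast_smul_eq_zsmul]
  refine ⟨q • (a • j₁ + b • j₂), ?_, by simp only [map_smul, LinearMap.smul_apply, hB, smul_zero],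
    q⁻¹ • (c • j₁ + d • j₂), by simp only [map_smul, LinearMap.smul_apply, hB, smul_zero],
    γ, hγ, ?_⟩
  · rw [hql]
    exact isPrimitiveIn_of_gcd_eq_one L j₁ j₂ hli hJL hsat x y hxy
  · rw [eichler_inv_smul_smul B _ _ (hB _ _ _ _) q hq]
    exact hγE
end
end
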